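/- arXiv:1111.1200 — 8 statements merged into one kernel-verified Lean document; each statement's English description precedes it below -/
import Mathlib

section
/- Let G and H be finite simple graphs on m and n vertices respectively. Then, as an identity in the field ℂ(λ) of rational functions, the characteristic polynomial of the corona satisfies f_{G∘H}(λ) = f_H(λ)^m · f_G(λ − χ_H(λ)), where f_G(λ − χ_H(λ)) denotes the polynomial f_G evaluated at the rational function λ − χ_H(λ). -/
open Matrix Polynomial

/-- The characteristic matrix `λ I - B` of `B`, over the field `ℂ(λ)` of rational functions. -/
noncomputable def charMatRatFunc {V : Type*} [Fintype V] [DecidableEq V]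
    (B : Matrix V V ℂ) : Matrix V V (RatFunc ℂ) :=
  Matrix.scalar V (RatFunc.X : RatFunc ℂ) - B.map (algebraMap ℂ (RatFunc ℂ))

/-- The coronal of a matrix `B`: the sum of the entries of `(λ I - B)⁻¹` over `ℂ(λ)`. -/
noncomputable def coronal {V : Type*} [Fintype V] [DecidableEq V]
    (B : Matrix V V ℂ) : RatFunc ℂ :=
  ∑ i, ∑ j, (charMatRatFunc B)⁻¹ i j

/-- The adjacency matrix of the corona `G ∘ H`. -/
def coronaMatrix {α β : Type*} (A : Matrix α α ℂ) (B : Matrix β β ℂ)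
    [DecidableEq α] :
    Matrix (α ⊕ β × α) (α ⊕ β × α) ℂ :=
  Matrix.fromBlocks A
    (Matrix.of fun i p => if i = p.2 then 1 else 0)
    (Matrix.of fun p j => if p.2 = j then 1 else 0)
    (Matrix.of fun p q => if p.2 = q.2 then B p.1 q.1 else 0)


open scoped Kronecker

theorem aeval_charpoly_ratFunc {V : Type*} [Fintype V] [DecidableEq V]
    (M : Matrix V V ℂ) (t : RatFunc ℂ) :
    Polynomial.aeval t M.charpoly =
      (Matrix.scalar V t - M.map (algebraMap ℂ (RatFunc ℂ))).det := by
  rw [← Matrix.eval_charpoly, Matrix.charpoly_map, Polynomial.eval_map_algebraMap]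

theorem algebraMap_charpoly_ratFunc {V : Type*} [Fintype V] [DecidableEq V]
    (M : Matrix V V ℂ) :
    algebraMap (Polynomial ℂ) (RatFunc ℂ) M.charpoly = (charMatRatFunc M).det := by
  rw [charMatRatFunc, ← aeval_charpoly_ratFunc, ← RatFunc.algebraMap_X,
    Polynomial.aeval_algebraMap_apply, Polynomial.aeval_X_left_apply]

theorem charMatRatFunc_det_ne_zero {V : Type*} [Fintype V] [DecidableEq V]
    (M : Matrix V V ℂ) : (charMatRatFunc M).det ≠ 0 := by
  rw [← algebraMap_charpoly_ratFunc]
  exact RatFunc.algebraMap_ne_zero M.charpoly_monic.ne_zero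

theorem charMatRatFunc_corona {α β : Type*} [Fintype α] [DecidableEq α] [Fintype β]
    [DecidableEq β] (A : Matrix α α ℂ) (B : Matrix β β ℂ) :
    charMatRatFunc (coronaMatrix A B) = Matrix.fromBlocks (charMatRatFunc A)
      (Matrix.of fun i p => if i = p.2 then -1 else 0)
      (Matrix.of fun p j => if p.2 = j then -1 else 0)
      (charMatRatFunc B ⊗ₖ (1 : Matrix α α (RatFunc ℂ))) := by
  ext i j
  rcases i with i | ⟨i, k⟩ <;> rcases j with j | ⟨j, l⟩
  · simp [charMatRatFunc, coronaMatrix, Matrix.diagonal_apply]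
  · by_cases h : i = l <;> simp [charMatRatFunc, coronaMatrix, h]
  · by_cases h : k = j <;> simp [charMatRatFunc, coronaMatrix, h]
  · by_cases h : k = l <;>
      simp [charMatRatFunc, coronaMatrix, h, Matrix.diagonal_apply]

theorem schur_term {α β : Type*} [Fintype α] [DecidableEq α] [Fintype β]
    [DecidableEq β] (N : Matrix β β (RatFunc ℂ)) :
    (Matrix.of fun (i : α) (p : β × α) => if i = p.2 then (-1 : RatFunc ℂ) else 0) *
      (N ⊗ₖ (1 : Matrix α α (RatFunc ℂ))) *
      (Matrix.of fun (p : β × α) (j : α) => if p.2 = j then (-1 : RatFunc ℂ) else 0) =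
    Matrix.scalar α (∑ i, ∑ j, N i j) := by
  have hc : ∑ i, ∑ j, N i j = ∑ j, ∑ i, N i j := Finset.sum_comm
  rw [hc]
  ext i j
  by_cases h : i = j <;>
    simp [Matrix.mul_apply, Fintype.sum_prod_type, Matrix.one_apply, h, Matrix.sum_apply]

/-- **Spectra of coronae** (McLeman–McNicholas, Theorem 1).
For finite simple graphs `G` on `m` vertices and `H` on `n` vertices, as an identity in the
field `ℂ(λ)`, the characteristic polynomial of the corona satisfies
`f_{G∘H}(λ) = f_H(λ)^m ⬝ f_G(λ - χ_H(λ))`. -/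
theorem corona_charpoly {m n : ℕ} (G : SimpleGraph (Fin m)) (H : SimpleGraph (Fin n))
    [DecidableRel G.Adj] [DecidableRel H.Adj] :
    algebraMap (Polynomial ℂ) (RatFunc ℂ)
        (coronaMatrix (G.adjMatrix ℂ) (H.adjMatrix ℂ)).charpoly =
      (algebraMap (Polynomial ℂ) (RatFunc ℂ) (H.adjMatrix ℂ).charpoly) ^ m *
        Polynomial.aeval (RatFunc.X - coronal (H.adjMatrix ℂ)) (G.adjMatrix ℂ).charpoly := by
  have hdet : ((charMatRatFunc (H.adjMatrix ℂ)) ⊗ₖ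
      (1 : Matrix (Fin m) (Fin m) (RatFunc ℂ))).det =
      (charMatRatFunc (H.adjMatrix ℂ)).det ^ m := by
    simp [Matrix.det_kronecker]
  have hu : IsUnit ((charMatRatFunc (H.adjMatrix ℂ)) ⊗ₖ
      (1 : Matrix (Fin m) (Fin m) (RatFunc ℂ))).det := by
    rw [hdet]
    exact (pow_ne_zero _ (charMatRatFunc_det_ne_zero _)).isUnit
  let _ := Matrix.invertibleOfIsUnitDet _ hu
  rw [algebraMap_charpoly_ratFunc, algebraMap_charpoly_ratFunc, charMatRatFunc_corona,
    Matrix.det_fromBlocks₂₂, hdet, aeval_charpoly_ratFunc, Matrix.invOf_eq_nonsing_inv,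
    Matrix.inv_kronecker, inv_one, schur_term, ← coronal, map_sub]
  congr 2
  rw [charMatRatFunc]
  abel
end

section
/- Let G and H be finite simple graphs on m and n vertices, and let λ₀ ∈ ℂ be a root of f_H which is not a pole of the coronal χ_H(λ) (i.e., λ₀ is not a root of the denominator of χ_H written as a reduced fraction). Then (λ − λ₀)^m divides the characteristic polynomial f_{G∘H}(λ); in particular λ₀ is an eigenvalue of G∘H with multiplicity at least m. -/
open Matrix Polynomial

open Kronecker in
theorem corona_aux {α β : Type*} [Fintype α] [DecidableEq α] [Fintype β] [DecidableEq β]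
    (A : Matrix α α ℂ) (B : Matrix β β ℂ) :
    algebraMap ℂ[X] (RatFunc ℂ) (coronaMatrix A B).charpoly =
      (algebraMap ℂ[X] (RatFunc ℂ) B.charpoly) ^ Fintype.card α *
        (charMatRatFunc A - Matrix.scalar α (coronal B)).det := by
  have hch : ∀ {V : Type _} [Fintype V] [DecidableEq V] (C : Matrix V V ℂ),
      (algebraMap ℂ[X] (RatFunc ℂ)).mapMatrix C.charmatrix = charMatRatFunc C := by
    intro V _ _ C
    ext i j
    by_cases h : i = j
    · subst h
      simp [charMatRatFunc, charmatrix_apply, RatFunc.algebraMap_eq_C]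
    · simp [charMatRatFunc, charmatrix_apply, h, RatFunc.algebraMap_eq_C]
  have hdet : (charMatRatFunc B).det = algebraMap ℂ[X] (RatFunc ℂ) B.charpoly := by
    rw [← hch, ← RingHom.map_det]; rfl
  have hne : (charMatRatFunc B).det ≠ 0 := by
    rw [hdet]
    simpa using B.charpoly_monic.ne_zero
  set J : Matrix α (β × α) (RatFunc ℂ) := Matrix.of fun i p => if i = p.2 then 1 else 0 with hJ
  have hblk : (algebraMap ℂ[X] (RatFunc ℂ)).mapMatrix (coronaMatrix A B).charmatrix =
      fromBlocks (charMatRatFunc A) (-J) (-Jᵀ)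
        (charMatRatFunc B ⊗ₖ (1 : Matrix α α (RatFunc ℂ))) := by
    ext i j
    rcases i with i | ⟨i, i'⟩ <;> rcases j with j | ⟨j, j'⟩
    · simp [coronaMatrix, charMatRatFunc, charmatrix_apply, Matrix.diagonal_apply,
        RatFunc.algebraMap_eq_C]
      split_ifs <;> simp
    · simp [coronaMatrix, charmatrix_apply, hJ]
    · simp [coronaMatrix, charmatrix_apply, hJ, eq_comm]
    · by_cases h : i = j <;> by_cases h' : i' = j' <;>
      simp [coronaMatrix, charMatRatFunc, charmatrix_apply, Matrix.diagonal_apply,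
        RatFunc.algebraMap_eq_C, h, h']
  have hD : IsUnit (charMatRatFunc B ⊗ₖ (1 : Matrix α α (RatFunc ℂ))) := by
    rw [Matrix.isUnit_iff_isUnit_det, det_kronecker]
    simp [hne]
  letI := hD.invertible
  have hinv : ⅟ (charMatRatFunc B ⊗ₖ (1 : Matrix α α (RatFunc ℂ))) =
      (charMatRatFunc B)⁻¹ ⊗ₖ (1 : Matrix α α (RatFunc ℂ)) := by
    rw [invOf_eq_nonsing_inv, inv_kronecker, inv_one]
  have hS : (-J) * ((charMatRatFunc B)⁻¹ ⊗ₖ (1 : Matrix α α (RatFunc ℂ))) * (-Jᵀ) =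
      Matrix.scalar α (coronal B) := by
    ext i j
    rw [Matrix.neg_mul, Matrix.neg_mul, Matrix.mul_neg, neg_neg]
    simp only [mul_apply, hJ, of_apply, transpose_apply, kroneckerMap_apply, one_apply,
      Fintype.sum_prod_type, scalar_apply, diagonal_apply, coronal]
    simp only [ite_mul, one_mul, zero_mul, mul_ite, mul_one, mul_zero, Finset.sum_ite_eq,
      Finset.mem_univ, if_true]
    by_cases h : i = j
    · subst h
      simp only [if_true]
      rw [Finset.sum_comm]
      simp
    · simp [h]
  rw [charpoly, RingHom.map_det, hblk, det_fromBlocks₂₂, hinv, hS, det_kronecker, hdet]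
  simp

/-- If `λ₀` is a root of `f_H` which is not a pole of the coronal `χ_H` (i.e. not a root of the
denominator of `χ_H` written as a reduced fraction), then `(λ - λ₀)^m` divides `f_{G∘H}`;
in particular `λ₀` is an eigenvalue of `G ∘ H` of multiplicity at least `m`. -/
theorem corona_old_eigenvalues {m n : ℕ} (G : SimpleGraph (Fin m)) (H : SimpleGraph (Fin n))
    [DecidableRel G.Adj] [DecidableRel H.Adj] (lam0 : ℂ)
    (hroot : (H.adjMatrix ℂ).charpoly.eval lam0 = 0)
    (hpole : (coronal (H.adjMatrix ℂ)).denom.eval lam0 ≠ 0) :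
    (Polynomial.X - Polynomial.C lam0) ^ m ∣
      (coronaMatrix (G.adjMatrix ℂ) (H.adjMatrix ℂ)).charpoly := by
  have key := corona_aux (G.adjMatrix ℂ) (H.adjMatrix ℂ)
  generalize G.adjMatrix ℂ = A at *
  generalize H.adjMatrix ℂ = B at *
  set χ := coronal B with hχ
  set q := χ.denom with hq
  have hq0 : algebraMap ℂ[X] (RatFunc ℂ) q ≠ 0 := by
    simpa using χ.denom_ne_zero
  have hp : algebraMap ℂ[X] (RatFunc ℂ) q * χ = algebraMap ℂ[X] (RatFunc ℂ) χ.num := by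
    have h := RatFunc.num_div_denom χ
    rw [← hq, div_eq_iff hq0] at h
    rw [h, mul_comm]
  let P : Matrix (Fin m) (Fin m) ℂ[X] :=
    Matrix.scalar (Fin m) (q * X - χ.num) - q • A.map C
  have hP : (algebraMap ℂ[X] (RatFunc ℂ)).mapMatrix P =
      algebraMap ℂ[X] (RatFunc ℂ) q • (charMatRatFunc A - Matrix.scalar (Fin m) χ) := by
    ext i j
    by_cases h : i = j
    · subst h
      simp [P, charMatRatFunc, RatFunc.algebraMap_eq_C, ← hp]
      ring
    · simp [P, charMatRatFunc, h, RatFunc.algebraMap_eq_C]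
  have hmain : q ^ m * (coronaMatrix A B).charpoly = B.charpoly ^ m * P.det := by
    apply RatFunc.algebraMap_injective ℂ
    rw [map_mul, map_mul, key, RingHom.map_det, hP, det_smul, map_pow, map_pow]
    simp only [Fintype.card_fin]
    ring
  have hdvd : (X - C lam0) ^ m ∣ q ^ m * (coronaMatrix A B).charpoly := by
    rw [hmain]
    exact (pow_dvd_pow_of_dvd (dvd_iff_isRoot.2 hroot) m).mul_right _
  refine IsCoprime.dvd_of_dvd_mul_left (IsCoprime.pow ?_) hdvd
  rw [(irreducible_X_sub_C lam0).coprime_iff_not_dvd, dvd_iff_isRoot]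
  exact hpole
end

section
/- Let G and H be finite simple graphs on m and n vertices with adjacency matrices A and B, and let λ₀ ∈ ℂ satisfy f_H(λ₀) ≠ 0. If λ₀ − 1_nᵀ(λ₀I_n − B)⁻¹1_n is an eigenvalue of G (equivalently, a root of f_G), then λ₀ is an eigenvalue of the corona G∘H, i.e., f_{G∘H}(λ₀) = 0. -/
open Matrix Polynomial

/-- If `f_H(λ₀) ≠ 0` and `λ₀ - 1ₙᵀ(λ₀ I - B)⁻¹ 1ₙ` is an eigenvalue of `G`, then `λ₀` is an
eigenvalue of the corona `G ∘ H`. -/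
theorem corona_new_eigenvalues {m n : ℕ} (G : SimpleGraph (Fin m)) (H : SimpleGraph (Fin n))
    [DecidableRel G.Adj] [DecidableRel H.Adj] (lam0 : ℂ)
    (hH : (H.adjMatrix ℂ).charpoly.eval lam0 ≠ 0)
    (hG : (G.adjMatrix ℂ).charpoly.eval
        (lam0 - ∑ i, ∑ j, ((Matrix.scalar (Fin n) lam0 - H.adjMatrix ℂ)⁻¹) i j) = 0) :
    (coronaMatrix (G.adjMatrix ℂ) (H.adjMatrix ℂ)).charpoly.eval lam0 = 0 := by
  rw [Matrix.eval_charpoly] at *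
  set M := Matrix.scalar (Fin n) lam0 - H.adjMatrix ℂ with hM
  set A := G.adjMatrix ℂ
  set B := H.adjMatrix ℂ
  obtain ⟨v, hv0, hv⟩ := Matrix.exists_mulVec_eq_zero_iff.mpr hG
  set u : Fin n → ℂ := fun i => ∑ j, M⁻¹ i j with hu
  have hu1 : M *ᵥ u = fun _ => 1 := by
    have h1 : u = M⁻¹ *ᵥ (fun _ => 1) := by
      ext i
      simp [hu, Matrix.mulVec, dotProduct]
    rw [h1, Matrix.mulVec_mulVec, Matrix.mul_nonsing_inv _ (isUnit_iff_ne_zero.mpr hH),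
      Matrix.one_mulVec]
  have hB : ∀ i, lam0 * u i - ∑ j, B i j * u j = 1 := by
    intro i
    have h := congrFun hu1 i
    rw [hM, Matrix.sub_mulVec] at h
    simpa [Matrix.mulVec_diagonal, Matrix.mulVec, dotProduct, Matrix.diagonal_apply] using h
  have hA : ∀ i, (lam0 - ∑ k, u k) * v i - ∑ j, A i j * v j = 0 := by
    intro i
    have h := congrFun hv i
    rw [Matrix.sub_mulVec] at h
    simpa [Matrix.mulVec, dotProduct, Matrix.diagonal_apply] using h
  apply Matrix.exists_mulVec_eq_zero_iff.mp
  refine ⟨Sum.elim v (fun p => u p.1 * v p.2), ?_, ?_⟩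
  · intro h
    apply hv0
    ext i
    exact congrFun h (Sum.inl i)
  · rw [Matrix.sub_mulVec]
    have hs : ∀ w : Fin m ⊕ Fin n × Fin m → ℂ,
        (Matrix.scalar (Fin m ⊕ Fin n × Fin m) lam0) *ᵥ w = fun x => lam0 * w x := by
      intro w
      ext x
      simp [Matrix.mulVec_diagonal, Matrix.scalar_apply]
    rw [hs]
    ext x
    rcases x with i | ⟨k, i⟩
    · have h := hA i
      simp only [coronaMatrix, Matrix.mulVec, dotProduct, Pi.sub_apply, Fintype.sum_sum_type,
        Matrix.fromBlocks_apply₁₁, Matrix.fromBlocks_apply₁₂, Sum.elim_inl, Sum.elim_inr,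
        Matrix.of_apply, Fintype.sum_prod_type, ite_mul, one_mul, zero_mul, Finset.sum_ite_eq,
        Finset.mem_univ, if_true, Pi.zero_apply, ← Finset.sum_mul]
      linear_combination h
    · have h := hB k
      simp only [coronaMatrix, Matrix.mulVec, dotProduct, Pi.sub_apply, Fintype.sum_sum_type,
        Matrix.fromBlocks_apply₂₁, Matrix.fromBlocks_apply₂₂, Sum.elim_inl, Sum.elim_inr,
        Matrix.of_apply, Fintype.sum_prod_type, ite_mul, one_mul, zero_mul, Finset.sum_ite_eq,
        Finset.mem_univ, if_true, Pi.zero_apply, ← mul_assoc, ← Finset.sum_mul]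
      linear_combination v i * h
end

section
/- Let G be a graph on m vertices with eigenvalues μ₁,…,μ_m (the roots of f_G, listed with multiplicity), and let H be an r-regular graph on n vertices. Then, as an identity of polynomials in ℂ[λ], (λ − r)^m · f_{G∘H}(λ) = f_H(λ)^m · ∏_{i=1}^{m} (λ² − (μ_i + r)λ + (rμ_i − n)). Consequently, for each eigenvalue μ of G, the two numbers (μ + r ± √((r − μ)² + 4n))/2 are eigenvalues of G∘H. -/
open Matrix Polynomial

lemma det_pencil_aux {m : ℕ} (A : Matrix (Fin m) (Fin m) ℂ) (μ : Fin m → ℂ)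
    (hμ : A.charpoly = ∏ i, (Polynomial.X - Polynomial.C (μ i))) (a b : ℂ) :
    (a • (1 : Matrix (Fin m) (Fin m) ℂ) - b • A).det = ∏ i, (a - b * μ i) := by
  by_cases hb : b = 0
  · subst hb
    simp [Matrix.det_smul]
  · have h := congrArg (Polynomial.eval (a / b)) hμ
    rw [Matrix.eval_charpoly, Polynomial.eval_prod] at h
    have h2 : a • (1 : Matrix (Fin m) (Fin m) ℂ) - b • A
        = b • (Matrix.scalar (Fin m) (a / b) - A) := by
      ext i j
      by_cases h : i = j <;> simp [Matrix.diagonal_apply, h, mul_sub, mul_div_cancel₀, hb]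
    rw [h2, Matrix.det_smul, h, Fintype.card_fin]
    have h3 : b ^ m = ∏ _i : Fin m, b := by simp
    rw [h3, ← Finset.prod_mul_distrib]
    refine Finset.prod_congr rfl fun i _ => ?_
    simp only [Polynomial.eval_sub, Polynomial.eval_X, Polynomial.eval_C]
    field_simp

lemma corona_eval_aux {m n : ℕ} (A : Matrix (Fin m) (Fin m) ℂ) (B : Matrix (Fin n) (Fin n) ℂ)
    (r : ℂ) (hB : ∀ v, ∑ w, B v w = r) (μ : Fin m → ℂ)
    (hμ : A.charpoly = ∏ i, (Polynomial.X - Polynomial.C (μ i))) (t : ℂ) :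
    (t - r) ^ m * (coronaMatrix A B).charpoly.eval t =
      B.charpoly.eval t ^ m * ∏ i, (t ^ 2 - (μ i + r) * t + (r * μ i - n)) := by
  rw [Matrix.eval_charpoly, Matrix.eval_charpoly]
  set E : Matrix (Fin m) (Fin n × Fin m) ℂ := Matrix.of fun i p => if i = p.2 then 1 else 0 with hE
  set F : Matrix (Fin n × Fin m) (Fin m) ℂ := Matrix.of fun p j => if p.2 = j then 1 else 0 with hF
  set D : Matrix (Fin n × Fin m) (Fin n × Fin m) ℂ :=
    Matrix.kroneckerMap (· * ·) (Matrix.scalar (Fin n) t - B) (1 : Matrix (Fin m) (Fin m) ℂ) with hD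
  have hM : Matrix.scalar (Fin m ⊕ Fin n × Fin m) t - coronaMatrix A B
      = Matrix.fromBlocks (Matrix.scalar (Fin m) t - A) (-E) (-F) D := by
    ext (i | ⟨p, i⟩) (j | ⟨q, j⟩)
    · simp [coronaMatrix, Matrix.diagonal_apply]
    · simp [coronaMatrix, hE]
    · simp [coronaMatrix, hF]
    · by_cases h1 : i = j <;> by_cases h2 : p = q <;>
        simp [coronaMatrix, hD, Matrix.diagonal_apply, Matrix.one_apply, h1, h2]
  have hEF : E * F = (n : ℂ) • (1 : Matrix (Fin m) (Fin m) ℂ) := by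
    ext i j
    by_cases h : i = j <;>
      simp [hE, hF, Matrix.mul_apply, Fintype.sum_prod_type, Matrix.one_apply, h]
  have hDF : D * F = (t - r) • F := by
    ext ⟨p, i⟩ j
    have : ∑ q, (Matrix.scalar (Fin n) t - B) p q = t - r := by
      simp [Finset.sum_sub_distrib, hB, Matrix.diagonal_apply]
    by_cases h : i = j
    · simpa [hD, hF, Matrix.mul_apply, Fintype.sum_prod_type, Matrix.one_apply, h] using this
    · simp [hD, hF, Matrix.mul_apply, Fintype.sum_prod_type, Matrix.one_apply, h]
  have hmul : Matrix.fromBlocks (Matrix.scalar (Fin m) t - A) (-E) (-F) D *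
      Matrix.fromBlocks ((t - r) • (1 : Matrix (Fin m) (Fin m) ℂ)) 0 F 1
      = Matrix.fromBlocks (((t - r) * t - n) • (1 : Matrix (Fin m) (Fin m) ℂ) - (t - r) • A)
          (-E) 0 D := by
    rw [Matrix.fromBlocks_multiply]
    congr 1
    · rw [Matrix.neg_mul, hEF]
      ext i j
      by_cases h : i = j <;> simp [Matrix.diagonal_apply, h] <;> ring
    · simp
    · simp [hDF]
    · simp
  have hdet := congrArg Matrix.det hmul
  rw [Matrix.det_mul, Matrix.det_fromBlocks_zero₁₂, Matrix.det_fromBlocks_zero₂₁, ← hM,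
    det_pencil_aux A μ hμ, hD, Matrix.det_kronecker] at hdet
  simp only [Matrix.det_smul, Matrix.det_one, Fintype.card_fin, mul_one, one_pow] at hdet
  rw [mul_comm, hdet, mul_comm]
  congr 1
  refine Finset.prod_congr rfl fun i _ => ?_
  ring

/-- For `G` with eigenvalues `μ₁, …, μ_m` and `H` an `r`-regular graph on `n ≥ 1` vertices:
`(λ - r)^m ⬝ f_{G∘H}(λ) = f_H(λ)^m ⬝ ∏ᵢ (λ² - (μᵢ + r)λ + (rμᵢ - n))`, and consequently for
each eigenvalue `μ` of `G` the two numbers `(μ + r ± √((r - μ)² + 4n))/2` are eigenvalues of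
`G ∘ H`. -/
theorem corona_regular_spectrum {m n : ℕ} (hn : 0 < n)
    (G : SimpleGraph (Fin m)) (H : SimpleGraph (Fin n))
    [DecidableRel G.Adj] [DecidableRel H.Adj] (r : ℕ)
    (hreg : ∀ v : Fin n, H.degree v = r) (μ : Fin m → ℂ)
    (hμ : (G.adjMatrix ℂ).charpoly = ∏ i, (Polynomial.X - Polynomial.C (μ i))) :
    (Polynomial.X - Polynomial.C (r : ℂ)) ^ m *
        (coronaMatrix (G.adjMatrix ℂ) (H.adjMatrix ℂ)).charpoly =
      (H.adjMatrix ℂ).charpoly ^ m *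
        ∏ i, (Polynomial.X ^ 2 - Polynomial.C (μ i + r) * Polynomial.X +
          Polynomial.C ((r : ℂ) * μ i - n)) ∧
    ∀ i : Fin m, ∀ z : ℂ, z ^ 2 = ((r : ℂ) - μ i) ^ 2 + 4 * n →
      (coronaMatrix (G.adjMatrix ℂ) (H.adjMatrix ℂ)).charpoly.eval ((μ i + r + z) / 2) = 0 := by
  have hB : ∀ v, ∑ w, (H.adjMatrix ℂ) v w = (r : ℂ) := by
    intro v
    rw [← hreg v]
    simp [SimpleGraph.adjMatrix_apply, ← SimpleGraph.card_neighborFinset_eq_degree,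
      SimpleGraph.neighborFinset_eq_filter]
  have key := corona_eval_aux (G.adjMatrix ℂ) (H.adjMatrix ℂ) (r : ℂ) hB μ hμ
  refine ⟨?_, ?_⟩
  · refine Polynomial.funext fun t => ?_
    have := key t
    simp only [Polynomial.eval_mul, Polynomial.eval_pow, Polynomial.eval_sub, Polynomial.eval_X,
      Polynomial.eval_C, Polynomial.eval_prod, Polynomial.eval_add]
    exact this
  · intro i z hz
    have h := key ((μ i + r + z) / 2)
    have hn' : (n : ℂ) ≠ 0 := by exact_mod_cast hn.ne'
    have hq : ((μ i + r + z) / 2) ^ 2 - (μ i + r) * ((μ i + r + z) / 2) + (r * μ i - n) = 0 := by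
      linear_combination hz / 4
    rw [Finset.prod_eq_zero (Finset.mem_univ i) hq, mul_zero] at h
    refine (mul_eq_zero.mp h).resolve_left (pow_ne_zero _ ?_)
    intro h0
    rw [sub_eq_zero.mp h0] at hq
    apply hn'
    linear_combination -hq
end

section
/- Let G be a graph on m vertices with eigenvalues μ₁,…,μ_m (the roots of f_G, listed with multiplicity), and let H = K_{p,q} be the complete bipartite graph on p + q vertices with p, q ≥ 1. Then, as an identity of polynomials in ℂ[λ], f_{G∘H}(λ) = λ^{m(p+q−2)} · ∏_{i=1}^{m} (λ³ − μ_iλ² − (p + q + pq)λ + pq(μ_i − 2)). In particular 0 is an eigenvalue of G∘H with multiplicity at least m(p+q−2), and for each eigenvalue μ of G, every root of x³ − μx² − (p+q+pq)x + pq(μ−2) is an eigenvalue of G∘H. -/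
open Matrix Polynomial

/-- The adjacency matrix of the complete bipartite graph `K_{p,q}`:
the block matrix `[[0_{p,p}, 1_{p,q}], [1_{q,p}, 0_{q,q}]]`. -/
def completeBipartiteMatrix (p q : ℕ) : Matrix (Fin p ⊕ Fin q) (Fin p ⊕ Fin q) ℂ :=
  Matrix.fromBlocks 0 (Matrix.of fun _ _ => 1) (Matrix.of fun _ _ => 1) 0

lemma det_cb (p q : ℕ) (hp : 1 ≤ p) (hq : 1 ≤ q) (x : ℂ) (hx : x ≠ 0) :
    (Matrix.scalar _ x - completeBipartiteMatrix p q).det =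
      x ^ (p + q - 2) * (x ^ 2 - p * q) := by
  -- unknowns: subtract multiples of the first block of columns
  have h1 : (Matrix.scalar _ x - completeBipartiteMatrix p q) *
      Matrix.fromBlocks 1 (Matrix.of fun (_ : Fin p) (_ : Fin q) => x⁻¹) 0 1 =
      Matrix.fromBlocks (Matrix.scalar _ x) 0 (Matrix.of fun _ _ => -1)
        (x • (1 + Matrix.replicateCol Unit (fun _ : Fin q => (1 : ℂ)) *
          Matrix.replicateRow Unit (fun _ : Fin q => -(p : ℂ) / x ^ 2))) := by
    have h2 : (Matrix.scalar (Fin p ⊕ Fin q) x - completeBipartiteMatrix p q) =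
      Matrix.fromBlocks (Matrix.scalar _ x) (Matrix.of fun _ _ => -1) (Matrix.of fun _ _ => -1)
        (Matrix.scalar _ x) := by
      ext i j
      rcases i with i | i <;> rcases j with j | j <;>
        simp [completeBipartiteMatrix, Matrix.diagonal_apply]
    rw [h2, Matrix.fromBlocks_multiply]
    congr 1
    · simp
    · ext i j; simp [hx]
    · simp
    · ext i j
      simp [Matrix.mul_apply, Matrix.diagonal_apply, Matrix.one_apply]
      split_ifs <;> field_simp <;> ring
  have h3 := congrArg Matrix.det h1
  rw [Matrix.det_mul, Matrix.det_fromBlocks_zero₂₁, Matrix.det_fromBlocks_zero₁₂,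
    Matrix.det_smul, Matrix.det_one_add_replicateCol_mul_replicateRow] at h3
  simp [dotProduct] at h3
  rw [Matrix.scalar_apply, h3]
  obtain ⟨a, rfl⟩ := Nat.exists_eq_add_of_le hp
  obtain ⟨b, rfl⟩ := Nat.exists_eq_add_of_le hq
  have : 1 + a + (1 + b) - 2 = a + b := by omega
  rw [this]
  push_cast
  field_simp
  ring

lemma det_corona {m : ℕ} (p q : ℕ) (A : Matrix (Fin m) (Fin m) ℂ) (x : ℂ)
    (hx2 : x ^ 2 - p * q ≠ 0) :
    (Matrix.scalar _ x - coronaMatrix A (completeBipartiteMatrix p q)).det =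
      (Matrix.scalar _ (x - ((p + q) * x + 2 * p * q) / (x ^ 2 - p * q)) - A).det *
      (Matrix.scalar _ x - completeBipartiteMatrix p q).det ^ m := by
  set w : Fin p ⊕ Fin q → ℂ := Sum.elim (fun _ => (x + q) / (x ^ 2 - p * q))
    (fun _ => (x + p) / (x ^ 2 - p * q)) with hw
  have hwB : ∀ b, x * w b - ∑ c, completeBipartiteMatrix p q b c * w c = 1 := by
    intro b
    rcases b with b | b <;>
      simp [hw, completeBipartiteMatrix] <;>
      rw [← mul_div_assoc, ← mul_div_assoc, ← sub_div, div_eq_one_iff_eq hx2] <;> ring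
  have hws : ∑ c, w c = ((p + q) * x + 2 * p * q) / (x ^ 2 - p * q) := by
    simp [hw]; field_simp; ring
  rw [← hws]
  set B := completeBipartiteMatrix p q
  have h2 : (Matrix.scalar (Fin m ⊕ (Fin p ⊕ Fin q) × Fin m) x - coronaMatrix A B) =
      Matrix.fromBlocks (Matrix.scalar _ x - A)
        (Matrix.of fun i p => if i = p.2 then -1 else 0)
        (Matrix.of fun p j => if p.2 = j then -1 else 0)
        (Matrix.kroneckerMap (· * ·) (Matrix.scalar _ x - B) (1 : Matrix (Fin m) (Fin m) ℂ)) := by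
    ext i j
    rcases i with i | ⟨i, i'⟩ <;> rcases j with j | ⟨j, j'⟩
    · simp [coronaMatrix, Matrix.diagonal_apply]
    · simp [coronaMatrix]; split_ifs <;> simp
    · simp [coronaMatrix]; split_ifs <;> simp
    · by_cases h1 : i = j <;> by_cases h2 : i' = j' <;>
        simp [coronaMatrix, Matrix.diagonal_apply, Matrix.one_apply, h1, h2]
  have h1 : (Matrix.scalar _ x - coronaMatrix A B) *
      Matrix.fromBlocks 1 0 (Matrix.of fun (c : (Fin p ⊕ Fin q) × Fin m) (j : Fin m) =>
        if c.2 = j then w c.1 else 0) 1 =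
      Matrix.fromBlocks (Matrix.scalar _ (x - ∑ c, w c) - A)
        (Matrix.of fun i p => if i = p.2 then -1 else 0) 0
        (Matrix.kroneckerMap (· * ·) (Matrix.scalar _ x - B) (1 : Matrix (Fin m) (Fin m) ℂ)) := by
    rw [h2, Matrix.fromBlocks_multiply]
    congr 1
    · ext i j
      simp only [Matrix.mul_one, Matrix.add_apply, Matrix.mul_apply, Matrix.of_apply,
        Fintype.sum_prod_type]
      by_cases h : i = j <;> simp [Matrix.diagonal_apply, h, -Fintype.sum_sum_type] <;> ring
    · simp
    · ext ⟨b, i⟩ j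
      have := hwB b
      simp only [Matrix.mul_one, Matrix.add_apply, Matrix.mul_apply, Matrix.of_apply,
        Fintype.sum_prod_type]
      by_cases h : i = j
      · simp [Matrix.diagonal_apply, Matrix.one_apply, h, sub_mul, Finset.sum_sub_distrib,
          -Fintype.sum_sum_type]
        linear_combination this
      · simp [Matrix.one_apply, h, -Fintype.sum_sum_type]
    · simp
  have h3 := congrArg Matrix.det h1
  rw [Matrix.det_mul, Matrix.det_fromBlocks_zero₁₂, Matrix.det_fromBlocks_zero₂₁,
    Matrix.det_kronecker] at h3
  simpa using h3

lemma charpoly_corona {m : ℕ} (p q : ℕ) (hp : 1 ≤ p) (hq : 1 ≤ q)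
    (A : Matrix (Fin m) (Fin m) ℂ) (μ : Fin m → ℂ)
    (hμ : A.charpoly = ∏ i, (Polynomial.X - Polynomial.C (μ i))) :
    (coronaMatrix A (completeBipartiteMatrix p q)).charpoly =
      Polynomial.X ^ (m * (p + q - 2)) *
        ∏ i, (Polynomial.X ^ 3 - Polynomial.C (μ i) * Polynomial.X ^ 2 -
          Polynomial.C ((p : ℂ) + q + p * q) * Polynomial.X +
          Polynomial.C ((p : ℂ) * q * (μ i - 2))) := by
  apply Polynomial.eq_of_infinite_eval_eq
  have hne : (Polynomial.X * (Polynomial.X ^ 2 - Polynomial.C ((p : ℂ) * q))) ≠ 0 :=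
    mul_ne_zero Polynomial.X_ne_zero (Polynomial.X_pow_sub_C_ne_zero (by norm_num) _)
  refine (Polynomial.finite_setOf_isRoot hne).infinite_compl.mono ?_
  intro x hx
  simp [Polynomial.IsRoot] at hx
  obtain ⟨hx0, hx2⟩ := hx
  rw [Set.mem_setOf_eq, Matrix.eval_charpoly, det_corona p q A x hx2, det_cb p q hp hq x hx0,
    ← Matrix.eval_charpoly, hμ]
  simp only [Polynomial.eval_prod, Polynomial.eval_mul, Polynomial.eval_pow, Polynomial.eval_X,
    Polynomial.eval_sub, Polynomial.eval_add, Polynomial.eval_C]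
  have hm : ((x ^ 2 - (p : ℂ) * q)) ^ m = ∏ _i : Fin m, (x ^ 2 - (p : ℂ) * q) := by simp
  rw [mul_pow, ← pow_mul, mul_comm (p + q - 2) m, mul_left_comm, hm, ← Finset.prod_mul_distrib]
  congr 1
  refine Finset.prod_congr rfl fun i _ => ?_
  field_simp
  ring

/-- For `G` with eigenvalues `μ₁, …, μ_m` and `H = K_{p,q}` (`p, q ≥ 1`):
`f_{G∘H}(λ) = λ^{m(p+q-2)} ⬝ ∏ᵢ (λ³ - μᵢλ² - (p+q+pq)λ + pq(μᵢ-2))`.  In particular `0` is an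
eigenvalue of `G ∘ H` of multiplicity at least `m(p+q-2)`, and every root of one of the cubics
is an eigenvalue of `G ∘ H`. -/
theorem corona_completeBipartite_spectrum {m : ℕ} (p q : ℕ) (hp : 1 ≤ p) (hq : 1 ≤ q)
    (G : SimpleGraph (Fin m)) [DecidableRel G.Adj] (μ : Fin m → ℂ)
    (hμ : (G.adjMatrix ℂ).charpoly = ∏ i, (Polynomial.X - Polynomial.C (μ i))) :
    (coronaMatrix (G.adjMatrix ℂ) (completeBipartiteMatrix p q)).charpoly =
      Polynomial.X ^ (m * (p + q - 2)) *
        ∏ i, (Polynomial.X ^ 3 - Polynomial.C (μ i) * Polynomial.X ^ 2 -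
          Polynomial.C ((p : ℂ) + q + p * q) * Polynomial.X +
          Polynomial.C ((p : ℂ) * q * (μ i - 2))) ∧
    Polynomial.X ^ (m * (p + q - 2)) ∣
      (coronaMatrix (G.adjMatrix ℂ) (completeBipartiteMatrix p q)).charpoly ∧
    ∀ i : Fin m, ∀ x : ℂ,
      x ^ 3 - μ i * x ^ 2 - ((p : ℂ) + q + p * q) * x + (p : ℂ) * q * (μ i - 2) = 0 →
      (coronaMatrix (G.adjMatrix ℂ) (completeBipartiteMatrix p q)).charpoly.eval x = 0 := by
  have h := charpoly_corona p q hp hq (G.adjMatrix ℂ) μ hμ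
  refine ⟨h, h ▸ dvd_mul_right _ _, fun i x hx => ?_⟩
  rw [h, Polynomial.eval_mul, Polynomial.eval_prod]
  refine mul_eq_zero_of_right _ (Finset.prod_eq_zero (Finset.mem_univ i) ?_)
  simpa using hx
end

section
/- Let P_n be the path graph on n ≥ 1 vertices and let f_j := f_{P_j}(λ) denote the characteristic polynomial of the path graph on j vertices, with the convention f_0 = 1. Then the coronal of P_n is χ_{P_n}(λ) = (n·f_n − 2·∑_{j=0}^{n−1} f_j) / ((λ − 2)·f_n) as an element of ℂ(λ). -/
open Matrix Polynomial

/-- The adjacency matrix of the path graph `Pₙ`: vertices `1, …, n` with `i` adjacent to `j`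
exactly when `|i - j| = 1`. -/
def pathMatrix (n : ℕ) : Matrix (Fin n) (Fin n) ℂ :=
  Matrix.of fun i j => if (i : ℕ) + 1 = (j : ℕ) ∨ (j : ℕ) + 1 = (i : ℕ) then 1 else 0


lemma path_cm_apply (n : ℕ) (i j : Fin n) :
    charmatrix (pathMatrix n) i j = (if (j : ℕ) = i then X else 0)
      - (if (j : ℕ) + 1 = i then 1 else 0) - (if (j : ℕ) = i + 1 then 1 else 0) := by
  rw [charmatrix_apply, pathMatrix, Matrix.diagonal_apply, Matrix.of_apply]
  simp only [Fin.ext_iff]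
  split_ifs <;> first | omega | simp

lemma path_minor (n : ℕ) :
    (charmatrix (pathMatrix (n + 1))).submatrix Fin.succ Fin.succ = charmatrix (pathMatrix n) := by
  ext1 i j
  simp [path_cm_apply]

lemma path_rec (n : ℕ) : (pathMatrix (n + 2)).charpoly =
    X * (pathMatrix (n + 1)).charpoly - (pathMatrix n).charpoly := by
  have h1 : ((charmatrix (pathMatrix (n + 2))).submatrix Fin.succ (Fin.succAbove 1)).det
      = - (charmatrix (pathMatrix n)).det := by
    rw [Matrix.det_succ_column_zero, Fin.sum_univ_succ, Finset.sum_eq_zero]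
    · have : ((charmatrix (pathMatrix (n + 2))).submatrix Fin.succ (Fin.succAbove 1)).submatrix
          (Fin.succAbove 0) Fin.succ = charmatrix (pathMatrix n) := by
        ext1 i j
        have : (Fin.succAbove (1 : Fin (n + 2)) j.succ) = j.succ.succ := by
          rw [← Fin.succ_zero_eq_one, Fin.succ_succAbove_succ]; simp
        simp [path_cm_apply, this]
      rw [this]
      simp [path_cm_apply, pathMatrix]
    · intro i _
      simp [path_cm_apply, pathMatrix]
  unfold Matrix.charpoly
  rw [Matrix.det_succ_row_zero, Fin.sum_univ_succ, Fin.sum_univ_succ, Finset.sum_eq_zero]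
  · have := path_minor (n + 1)
    simp only [Fin.succ_zero_eq_one, h1, Fin.succAbove_zero, this]
    simp [path_cm_apply, pathMatrix]
    ring
  · intro i _
    rw [path_cm_apply]
    simp

lemma path_zero : (pathMatrix 0).charpoly = 1 := Matrix.charpoly_isEmpty
lemma path_one : (pathMatrix 1).charpoly = X := by
  simp [Matrix.charpoly, pathMatrix]

lemma path_row (n : ℕ) (g : ℕ → ℂ[X]) (i : Fin n) :
    ∑ j : Fin n, charmatrix (pathMatrix n) i j * g j =
      X * g i - (if (i : ℕ) = 0 then 0 else g (i - 1)) - (if (i : ℕ) + 1 < n then g (i + 1) else 0) := by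
  simp only [path_cm_apply]
  rw [Fin.sum_univ_eq_sum_range (fun j : ℕ => ((if j = i then X else 0)
      - (if j + 1 = i then 1 else 0) - (if j = i + 1 then 1 else 0)) * g j) n]
  obtain ⟨i, hi⟩ := i
  simp only [sub_mul, ite_mul, zero_mul, one_mul, Finset.sum_sub_distrib]
  cases i with
  | zero => simp [Finset.sum_ite_eq', hi]
  | succ k => simp [Finset.sum_ite_eq', hi, show k < n by omega]

lemma path_solve_aux (f : ℕ → ℂ[X]) (h0 : f 0 = 1) (h1 : f 1 = X)
    (hr : ∀ n, f (n + 2) = X * f (n + 1) - f n) (n : ℕ) (i : Fin n) :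
    ∑ j : Fin n, charmatrix (pathMatrix n) i j * (f n - f j - f (n - 1 - j)) = (X - 2) * f n := by
  rw [path_row n (fun j => f n - f j - f (n - 1 - j))]
  obtain ⟨i, hi⟩ := i
  obtain ⟨m, rfl⟩ : ∃ m, n = i + m + 1 := ⟨n - i - 1, by omega⟩
  have e1 : i + m + 1 - 1 - i = m := by omega
  have e2 : i + m + 1 - 1 - (i + 1) = m - 1 := by omega
  have e3 : i + m + 1 - 1 - (i - 1) = if i = 0 then m else m + 1 := by split_ifs <;> omega
  have e6 : i + 1 < i + m + 1 ↔ m ≠ 0 := by omega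
  dsimp only
  simp only [e1, e2, e3, e6]
  clear e1 e2 e3 e6
  rcases i with _ | i <;> rcases m with _ | m
  · simp [h0, h1]; ring
  · have := hr m
    simp [h0, h1, this]; ring
  · have := hr i
    simp [h0, h1, this]; ring
  · have g1 := hr i
    have g2 := hr m
    simp [g1, g2]; ring

lemma path_solve (n : ℕ) (i : Fin n) :
    ∑ j : Fin n, charmatrix (pathMatrix n) i j *
      ((pathMatrix n).charpoly - (pathMatrix j).charpoly - (pathMatrix (n - 1 - j)).charpoly) =
      (X - 2) * (pathMatrix n).charpoly :=
  path_solve_aux (fun j => (pathMatrix j).charpoly) path_zero path_one path_rec n i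

/-- The coronal of the path graph `Pₙ` is `(n fₙ - 2 ∑_{j<n} fⱼ) / ((λ - 2) fₙ)`,
where `fⱼ` is the characteristic polynomial of `Pⱼ` (with `f₀ = 1`). -/
theorem coronal_path (n : ℕ) (hn : 1 ≤ n) :
    coronal (pathMatrix n) =
      algebraMap (Polynomial ℂ) (RatFunc ℂ)
          ((n : Polynomial ℂ) * (pathMatrix n).charpoly -
            2 * ∑ j ∈ Finset.range n, (pathMatrix j).charpoly) /
        algebraMap (Polynomial ℂ) (RatFunc ℂ)
          ((Polynomial.X - 2) * (pathMatrix n).charpoly) := by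
  set φ := algebraMap (Polynomial ℂ) (RatFunc ℂ) with hφ
  have hinj : Function.Injective φ := IsFractionRing.injective _ _
  have hM : charMatRatFunc (pathMatrix n) = (charmatrix (pathMatrix n)).map φ := by
    ext1 i j
    simp only [charMatRatFunc, charmatrix_apply, Matrix.map_apply, Matrix.sub_apply,
      Matrix.scalar_apply, Matrix.diagonal_apply, map_sub]
    congr 1
    · split_ifs <;> simp [hφ]
  have hf : (pathMatrix n).charpoly ≠ 0 := (Matrix.charpoly_monic _).ne_zero
  have hX : (X - 2 : ℂ[X]) ≠ 0 := by
    exact Polynomial.X_sub_C_ne_zero (2 : ℂ)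
  have hD : φ ((X - 2) * (pathMatrix n).charpoly) ≠ 0 := by
    rw [Ne, map_eq_zero_iff φ hinj]
    exact mul_ne_zero hX hf
  have hdet : IsUnit (charMatRatFunc (pathMatrix n)).det := by
    rw [hM, isUnit_iff_ne_zero]
    have : ((charmatrix (pathMatrix n)).map φ).det = φ (pathMatrix n).charpoly :=
      (RingHom.map_det φ _).symm
    rw [this, Ne, map_eq_zero_iff φ hinj]
    exact hf
  let u : Fin n → RatFunc ℂ := fun j => φ ((pathMatrix n).charpoly - (pathMatrix j).charpoly
    - (pathMatrix (n - 1 - j)).charpoly)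
  have hu : charMatRatFunc (pathMatrix n) *ᵥ u =
      φ ((X - 2) * (pathMatrix n).charpoly) • (fun _ => 1) := by
    ext1 i
    rw [hM]
    simp only [Matrix.mulVec, dotProduct, Matrix.map_apply, u, Pi.smul_apply, smul_eq_mul, mul_one]
    rw [← path_solve n i, map_sum]
    simp only [map_mul]
  have hv : u = φ ((X - 2) * (pathMatrix n).charpoly) •
      ((charMatRatFunc (pathMatrix n))⁻¹ *ᵥ (fun _ => 1)) := by
    rw [← Matrix.mulVec_smul, ← hu, Matrix.mulVec_mulVec, Matrix.nonsing_inv_mul _ hdet,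
      Matrix.one_mulVec]
  have hs : ∑ i, u i = φ ((X - 2) * (pathMatrix n).charpoly) * coronal (pathMatrix n) := by
    rw [hv, coronal, Finset.mul_sum]
    simp [Matrix.mulVec, dotProduct]
  rw [eq_div_iff hD, mul_comm, ← hs]
  simp only [u]
  rw [← map_sum, Fin.sum_univ_eq_sum_range (fun j : ℕ => (pathMatrix n).charpoly
    - (pathMatrix j).charpoly - (pathMatrix (n - 1 - j)).charpoly) n]
  rw [Finset.sum_sub_distrib, Finset.sum_sub_distrib,
    Finset.sum_range_reflect (fun j => (pathMatrix j).charpoly) n]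
  congr 1
  simp
  ring
end

section
/- (Schwenk) Let H be a finite simple graph with adjacency matrix B, and let i and j be vertices of H. Then the (i,j) entry of the adjugate of λI − B equals the sum, over all paths P in H from i to j, of the characteristic polynomial of the induced subgraph H − P obtained by deleting all vertices of P: adj(λI − B)_{i,j} = ∑_{P ∈ 𝒫_{i,j}} f_{H−P}(λ). -/
open Matrix Polynomial

/-- Expansion of an off-diagonal adjugate entry along row `i`. -/
theorem adjugate_step {V R : Type*} [Fintype V] [DecidableEq V] [CommRing R]
    (M : Matrix V V R) (i j : V) (hij : i ≠ j) :
    M.adjugate i j =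
      ∑ k, if k = i then 0 else (-M i k) * (M.updateRow i (Pi.single i 1)).adjugate k j := by
  rw [adjugate_apply, det_eq_sum_mul_adjugate_row _ i]
  refine Finset.sum_congr rfl fun k _ => ?_
  rw [updateRow_ne hij, adjugate_apply]
  split_ifs with hk
  · subst hk
    rw [det_zero_of_row_eq hij, mul_zero]
    rw [updateRow_self, updateRow_ne hij.symm, updateRow_self]
  · rw [adjugate_apply, neg_mul, ← mul_neg]
    congr 1
    have h := det_permute (Equiv.swap i j)
      ((M.updateRow i (Pi.single i 1)).updateRow j (Pi.single k 1))
    rw [Equiv.Perm.sign_swap hij] at h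
    simp only [Units.val_neg, Units.val_one, Int.cast_neg, Int.cast_one, neg_mul, one_mul] at h
    rw [← h]
    congr 1
    ext a b
    by_cases ha : a = i
    · subst ha
      simp
    · by_cases hb : a = j
      · subst hb
        simp [updateRow_ne hij, updateRow_ne ha]
      · simp [Equiv.swap_apply_of_ne_of_ne ha hb, updateRow_ne ha, updateRow_ne hb]

/-- Replace the rows indexed by `S` by rows of the identity. -/
def killRows {V R : Type*} [DecidableEq V] [CommRing R] (M : Matrix V V R) (S : Finset V) :
    Matrix V V R :=
  fun u v => if u ∈ S then (Pi.single u 1 : V → R) v else M u v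

theorem killRows_insert {V R : Type*} [DecidableEq V] [CommRing R] (M : Matrix V V R)
    (S : Finset V) (i : V) :
    (killRows M S).updateRow i (Pi.single i 1) = killRows M (insert i S) := by
  ext a b
  by_cases ha : a = i
  · subst ha
    simp [killRows]
  · simp [killRows, updateRow_ne ha, ha]

theorem killRows_det {V R : Type*} [Fintype V] [DecidableEq V] [CommRing R] (M : Matrix V V R)
    (S : Finset V) (p : V → Prop) [DecidablePred p] (hp : ∀ v, p v ↔ v ∉ S) :
    (killRows M S).det =
      (M.submatrix (fun v : {v // p v} => (v : V)) (fun v : {v // p v} => (v : V))).det := by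
  rw [twoBlockTriangular_det (killRows M S) p]
  · have h2 : (toSquareBlockProp (killRows M S) fun i => ¬ p i) = 1 := by
      ext ⟨a, ha⟩ ⟨b, hb⟩
      have : a ∈ S := by simpa [hp] using ha
      simp [toSquareBlockProp, killRows, this, one_apply, Pi.single_apply, eq_comm]
    have h1 : toSquareBlockProp (killRows M S) p =
        M.submatrix (fun v : {v // p v} => (v : V)) (fun v : {v // p v} => (v : V)) := by
      ext ⟨a, ha⟩ ⟨b, hb⟩
      have : a ∉ S := (hp a).1 ha
      simp [toSquareBlockProp, killRows, this]
    rw [h1, h2, det_one, mul_one]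
  · intro a ha b hb
    have h : a ∈ S := by simpa [hp] using ha
    have hab : b ≠ a := by rintro rfl; exact ha hb
    simp [killRows, h, hab]

theorem schwenk_aux {V : Type*} [Fintype V] [DecidableEq V] (H : SimpleGraph V)
    [DecidableRel H.Adj] (n : ℕ) : ∀ (S : Finset V) (i j : V), Sᶜ.card = n → j ∉ S →
    (killRows (Matrix.charmatrix (H.adjMatrix ℂ)) S).adjugate i j =
      ∑ P ∈ (Finset.univ : Finset (H.Path i j)).filter
        (fun P : H.Path i j => ∀ v ∈ (P : H.Walk i j).support, v ∉ S),
        (killRows (Matrix.charmatrix (H.adjMatrix ℂ))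
          (S ∪ (P : H.Walk i j).support.toFinset)).det := by
  induction n using Nat.strong_induction_on with
  | _ n ih =>
  intro S i j hn hj
  by_cases hi : i ∈ S
  · have hij : i ≠ j := by rintro rfl; exact hj hi
    rw [Finset.filter_false_of_mem, Finset.sum_empty, adjugate_apply]
    · apply det_zero_of_row_eq hij
      ext b
      simp [updateRow_ne hij, killRows, hi]
    · intro P _ h
      exact h i (SimpleGraph.Walk.start_mem_support _) hi
  by_cases hij : i = j
  · subst hij
    have hu : (Finset.univ : Finset (H.Path i i)).filter
        (fun P : H.Path i i => ∀ v ∈ (P : H.Walk i i).support, v ∉ S) = {SimpleGraph.Path.nil} := by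
      ext P
      have hP : P = SimpleGraph.Path.nil := SimpleGraph.Path.loop_eq P
      subst hP
      simp [hi]
    rw [hu, Finset.sum_singleton, adjugate_apply, killRows_insert]
    congr 2
    ext a
    simp [or_comm]
  rw [adjugate_step _ _ _ hij, killRows_insert]
  have hcard : (insert i S)ᶜ.card < n := by
    rw [← hn]
    apply Finset.card_lt_card
    rw [Finset.compl_ssubset_compl]
    exact Finset.ssubset_insert hi
  have hj' : j ∉ insert i S := by simp [hj, Ne.symm hij]
  have hterm : ∀ k, (if k = i then 0 else
      (-killRows (Matrix.charmatrix (H.adjMatrix ℂ)) S i k) *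
        (killRows (Matrix.charmatrix (H.adjMatrix ℂ)) (insert i S)).adjugate k j) =
      if H.Adj i k then (killRows (Matrix.charmatrix (H.adjMatrix ℂ)) (insert i S)).adjugate k j
        else 0 := by
    intro k
    by_cases hk : k = i
    · subst hk; simp
    · by_cases ha : H.Adj i k <;>
        simp [hk, killRows, hi, charmatrix_apply_ne _ _ _ (Ne.symm hk), ha]
  simp_rw [hterm]
  rw [← Finset.sum_filter]
  simp_rw [ih _ hcard (insert i S) _ j rfl hj']
  rw [Finset.sum_sigma']
  refine Finset.sum_bij (fun x hx => ⟨SimpleGraph.Walk.cons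
      (by simpa using (Finset.mem_sigma.1 hx).1) x.2.1, ?_⟩) ?_ ?_ ?_ ?_
  · rw [SimpleGraph.Walk.cons_isPath_iff]
    refine ⟨x.2.2, fun h => ?_⟩
    have := (Finset.mem_filter.1 (Finset.mem_sigma.1 hx).2).2 i h
    simp at this
  · rintro ⟨k, Q⟩ hx
    have h2 := (Finset.mem_filter.1 (Finset.mem_sigma.1 hx).2).2
    simp only [Finset.mem_filter, Finset.mem_univ, true_and, SimpleGraph.Walk.support_cons,
      List.mem_cons, forall_eq_or_imp]
    refine ⟨hi, fun v hv hS => h2 v hv (Finset.mem_insert_of_mem hS)⟩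
  · rintro ⟨k, Q, hQ⟩ hx ⟨k', Q', hQ'⟩ hx' h
    simp only [Subtype.mk.injEq, SimpleGraph.Walk.cons.injEq] at h
    obtain ⟨rfl, h⟩ := h
    simpa using h
  · rintro ⟨P, hP⟩ hx
    cases P with
    | nil => exact absurd rfl hij
    | cons h Q =>
      rw [SimpleGraph.Walk.cons_isPath_iff] at hP
      refine ⟨⟨_, Q, hP.1⟩, ?_, rfl⟩
      simp only [Finset.mem_filter, Finset.mem_univ, true_and, SimpleGraph.Walk.support_cons,
        List.mem_cons, forall_eq_or_imp] at hx
      simp only [Finset.mem_sigma, Finset.mem_filter, Finset.mem_univ, true_and,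
        Finset.mem_insert, not_or]
      exact ⟨h, fun v hv => ⟨fun e => hP.2 (e ▸ hv), hx.2 v hv⟩⟩
  · rintro ⟨k, Q⟩ hx
    congr 2
    ext a
    simp

/-- **Schwenk's theorem**: for vertices `i, j` of a graph `H` with adjacency matrix `B`,
the `(i, j)` entry of the adjugate of `λI - B` is the sum, over all paths `P` from `i` to `j`
in `H`, of the characteristic polynomial of the induced subgraph `H - P` obtained by deleting
the vertices of `P`. -/
theorem schwenk_adjugate {V : Type*} [Fintype V] [DecidableEq V] (H : SimpleGraph V)
    [DecidableRel H.Adj] (i j : V) :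
    (Matrix.charmatrix (H.adjMatrix ℂ)).adjugate i j =
      ∑ P : H.Path i j,
        ((H.adjMatrix ℂ).submatrix
          (fun v : {v : V // v ∉ (P : H.Walk i j).support} => (v : V))
          (fun v : {v : V // v ∉ (P : H.Walk i j).support} => (v : V))).charpoly := by
  have h := schwenk_aux H _ ∅ i j rfl (by simp)
  have h0 : killRows (Matrix.charmatrix (H.adjMatrix ℂ)) ∅ =
      Matrix.charmatrix (H.adjMatrix ℂ) := by
    ext a b
    simp [killRows]
  rw [h0] at h
  rw [h, Finset.filter_true_of_mem (by simp)]
  refine Finset.sum_congr rfl fun P _ => ?_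
  rw [killRows_det _ _ (fun v => v ∉ (P : H.Walk i j).support) (by simp), Matrix.charpoly]
  congr 1
  ext1 a b
  simp [charmatrix_apply, diagonal_apply, Subtype.ext_iff]
end

section
/- If G₁ and G₂ are cospectral graphs (on the same number m of vertices, with equal characteristic polynomials) and H is any graph, then the coronas G₁∘H and G₂∘H are cospectral: f_{G₁∘H}(λ) = f_{G₂∘H}(λ). -/
open Matrix Polynomial

open scoped Kronecker in
/-- Evaluation of the characteristic polynomial of the corona away from the spectrum of `B`. -/
theorem eval_charpoly_corona {m n : ℕ} (A : Matrix (Fin m) (Fin m) ℂ)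
    (B : Matrix (Fin n) (Fin n) ℂ) (z : ℂ) (hz : B.charpoly.eval z ≠ 0) :
    (coronaMatrix A B).charpoly.eval z =
      ((Matrix.scalar (Fin n) z - B) ⊗ₖ (1 : Matrix (Fin m) (Fin m) ℂ)).det *
        A.charpoly.eval (z - ∑ i, ∑ j, (Matrix.scalar (Fin n) z - B)⁻¹ i j) := by
  rw [Matrix.eval_charpoly] at hz
  rw [Matrix.eval_charpoly, Matrix.eval_charpoly]
  set E := Matrix.scalar (Fin n) z - B with hE
  have hu : IsUnit E.det := isUnit_iff_ne_zero.mpr hz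
  let D : Matrix (Fin n × Fin m) (Fin n × Fin m) ℂ := E ⊗ₖ 1
  have h1 : D * (E⁻¹ ⊗ₖ (1 : Matrix (Fin m) (Fin m) ℂ)) = 1 := by
    simp only [D]
    rw [← Matrix.mul_kronecker_mul, Matrix.mul_nonsing_inv _ hu, one_mul, Matrix.one_kronecker_one]
  let _ : Invertible D := ⟨_, _root_.mul_eq_one_comm.mp h1, h1⟩
  have hinv : ⅟D = E⁻¹ ⊗ₖ (1 : Matrix (Fin m) (Fin m) ℂ) := rfl
  have hblock : Matrix.scalar (Fin m ⊕ Fin n × Fin m) z - coronaMatrix A B =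
      Matrix.fromBlocks (Matrix.scalar (Fin m) z - A)
        (Matrix.of fun i p => if i = p.2 then -1 else 0)
        (Matrix.of fun p j => if p.2 = j then -1 else 0) D := by
    ext i j
    rcases i with i | ⟨i, i'⟩ <;> rcases j with j | ⟨j, j'⟩
    · simp [coronaMatrix, Matrix.diagonal_apply]
    · simp only [coronaMatrix, Matrix.scalar_apply, Matrix.sub_apply, Matrix.diagonal_apply,
        Matrix.fromBlocks_apply₁₂, Matrix.of_apply]
      split_ifs <;> simp_all
    · simp only [coronaMatrix, Matrix.scalar_apply, Matrix.sub_apply, Matrix.diagonal_apply,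
        Matrix.fromBlocks_apply₂₁, Matrix.of_apply]
      split_ifs <;> simp_all
    · simp only [coronaMatrix, Matrix.scalar_apply, Matrix.sub_apply, Matrix.diagonal_apply,
        Matrix.fromBlocks_apply₂₂, Matrix.of_apply, D, hE, Matrix.kronecker_apply,
        Matrix.one_apply, Sum.inr.injEq, Prod.mk.injEq]
      by_cases h : i = j <;> by_cases h' : i' = j' <;> simp [h, h']
  rw [hblock, Matrix.det_fromBlocks₂₂, hinv]
  congr 2
  ext i j
  simp only [Matrix.sub_apply, Matrix.mul_apply, Matrix.of_apply, Matrix.kronecker_apply,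
    Fintype.sum_prod_type, Matrix.one_apply, Matrix.scalar_apply, Matrix.diagonal_apply]
  by_cases h : i = j
  · subst h
    simp
    rw [Finset.sum_comm]
    ring
  · simp [h]

/-- If `G₁` and `G₂` are cospectral then `G₁ ∘ H` and `G₂ ∘ H` are cospectral, for any `H`. -/
theorem corona_cospectral_left {m n : ℕ} (G₁ G₂ : SimpleGraph (Fin m))
    (H : SimpleGraph (Fin n)) [DecidableRel G₁.Adj] [DecidableRel G₂.Adj] [DecidableRel H.Adj]
    (hcospec : (G₁.adjMatrix ℂ).charpoly = (G₂.adjMatrix ℂ).charpoly) :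
    (coronaMatrix (G₁.adjMatrix ℂ) (H.adjMatrix ℂ)).charpoly =
      (coronaMatrix (G₂.adjMatrix ℂ) (H.adjMatrix ℂ)).charpoly := by
  have hB : (H.adjMatrix ℂ).charpoly ≠ 0 := (Matrix.charpoly_monic _).ne_zero
  apply Polynomial.eq_of_infinite_eval_eq
  refine Set.Infinite.mono ?_ (Polynomial.finite_setOfPred_isRoot hB).infinite_compl
  intro z hz
  have hz' : (H.adjMatrix ℂ).charpoly.eval z ≠ 0 := hz
  simp only [Set.mem_ofPred_eq]
  rw [eval_charpoly_corona _ _ z hz', eval_charpoly_corona _ _ z hz', hcospec]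
end
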